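/- For each clock x in a finite nonempty set X, introduce two CLTLoc clocks x₀, x₁ and an integer variable x_v, and let φ_clock := ⋀_{x∈X}(x₀ = 0 ∧ x₁ > 0 ∧ x_v = 0) ∧ G ⋀_{j∈{0,1}} ⋀_{x∈X}((x_j = 0) → X((x_{(j+1) mod 2} = 0) R ((x_v = j) ∧ (x_j > 0)))). Then in every interpretation (π, σ, ι) satisfying φ_clock, for every x ∈ X: (i) for every position i ∈ ℕ, it is not the case that both σ(i, x₀) = 0 and σ(i, x₁) = 0; and (ii) resets of x₀ and x₁ strictly alternate: if σ(i, x_j) = 0 and σ(i′, x_j) = 0 with i < i′ (for the same j ∈ {0,1}), then there exists i″ with i < i″ < i′ and σ(i″, x_{(j+1) mod 2}) = 0. Consequently, at every position at least one of the two clocks x₀, x₁ is not reset at the next position, so the delay δ_i of the clock assignment is uniquely determined as σ(i+1, x_j) − σ(i, x_j) for a non-reset copy. -/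

import Mathlib

/-!
Unfolding the release operator, `φ_clock` says: if `x_j` is `0` at `i` and the other copy is
nonzero strictly between `i` and `k`, then `x_j` is nonzero at `k` (`phiClock_step`). The
contrapositive is strict alternation. If both copies were `0` at `i`, then `i > 0` by the initial
condition, and the last position `k < i` at which some copy `x_j` is `0` exists since `x₀` is `0`
at `0`; no copy vanishes between `k` and `i`, so `x_j` is nonzero at `i`, a contradiction
(`phiClock_not_both`). Hence at every `i + 1` some copy is nonzero, i.e. it was not reset, and it
advanced by exactly the delay.
-/

open scoped NNReal

namespace TAMC

/-! ### CLTLoc with integer variables (CLTLoc_v). -/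

/-- Comparison operators (with the derived `≤`, `≥`, `>` included). -/
inductive Cmp5 where
  | lt | le | eq | ge | gt
deriving DecidableEq

def Cmp5.holds {α : Type*} [Preorder α] : Cmp5 → α → α → Prop
  | .lt, a, b => a < b
  | .le, a, b => a ≤ b
  | .eq, a, b => a = b
  | .ge, a, b => b ≤ a
  | .gt, a, b => b < a

/-- Arithmetic terms over integer variables, allowing `X(n)` (the value of the
variable `n` at the next position). -/
inductive NTerm (V : Type) where
  | const (c : ℤ)
  | var (v : V)
  | nextVar (v : V)
  | add (a b : NTerm V)
  | neg (a : NTerm V)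
  | mul (a b : NTerm V)

def NTerm.eval {V : Type} (ι : ℕ → V → ℤ) (i : ℕ) : NTerm V → ℤ
  | .const c => c
  | .var v => ι i v
  | .nextVar v => ι (i + 1) v
  | .add a b => a.eval ι i + b.eval ι i
  | .neg a => - a.eval ι i
  | .mul a b => a.eval ι i * b.eval ι i

/-- CLTLoc_v formulas over atomic propositions `P`, clocks `C` and integer
variables `V`: propositions, clock atoms `x ∼ c`, arithmetic atoms and the
connectives `∧`, `¬`, `X`, `U`. -/
inductive CLTLoc (P C V : Type) where
  | tt
  | prop (p : P)
  | clk (op : Cmp5) (x : C) (d : ℕ)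
  | icmp (op : Cmp5) (a b : NTerm V)
  | and (f g : CLTLoc P C V)
  | not (f : CLTLoc P C V)
  | next (f : CLTLoc P C V)
  | untl (f g : CLTLoc P C V)

/-- A CLTLoc_v interpretation `(π, σ, ι)`: propositions `pr`, a clock assignment
`cl` with delays `del` (each clock either advances by the common delay or is
reset to `0`; time progresses, i.e. the delays sum to `∞`), and integer values
`iv`. -/
structure CLTLocInterp (P C V : Type) where
  pr : ℕ → Set P
  cl : ℕ → C → ℝ≥0
  iv : ℕ → V → ℤ
  del : ℕ → ℝ≥0
  del_pos : ∀ i, 0 < del i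
  cl_step : ∀ i x, cl (i + 1) x = cl i x + del i ∨ cl (i + 1) x = 0
  progress : Filter.Tendsto (fun n => ∑ i ∈ Finset.range n, del i)
      Filter.atTop Filter.atTop

/-- Satisfaction of a CLTLoc_v formula at a position. -/
def CLTLoc.sat {P C V : Type} (M : CLTLocInterp P C V) : ℕ → CLTLoc P C V → Prop
  | _, .tt => True
  | i, .prop p => p ∈ M.pr i
  | i, .clk op x d => op.holds (M.cl i x) (d : ℝ≥0)
  | i, .icmp op a b => op.holds (a.eval M.iv i) (b.eval M.iv i)
  | i, .and f g => sat M i f ∧ sat M i g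
  | i, .not f => ¬ sat M i f
  | i, .next f => sat M (i + 1) f
  | i, .untl f g => ∃ j, i ≤ j ∧ sat M j g ∧ ∀ m, i ≤ m → m < j → sat M m f

/-- `(π, σ, ι)` is a model of `f` when `f` holds at position `0`. -/
def CLTLoc.Models {P C V : Type} (M : CLTLocInterp P C V) (f : CLTLoc P C V) : Prop :=
  f.sat M 0

namespace CLTLoc

variable {P C V : Type}

def or (f g : CLTLoc P C V) : CLTLoc P C V := .not (.and (.not f) (.not g))
def imp (f g : CLTLoc P C V) : CLTLoc P C V := or (.not f) g
def iff (f g : CLTLoc P C V) : CLTLoc P C V := .and (imp f g) (imp g f)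
/-- The "eventually" modality `F`. -/
def ev (f : CLTLoc P C V) : CLTLoc P C V := .untl .tt f
/-- The "globally" modality `G`. -/
def alw (f : CLTLoc P C V) : CLTLoc P C V := .not (ev (.not f))
/-- The "release" modality `R`. -/
def release (f g : CLTLoc P C V) : CLTLoc P C V := .not (.untl (.not f) (.not g))
def bigAnd (l : List (CLTLoc P C V)) : CLTLoc P C V := l.foldr .and .tt
def bigOr (l : List (CLTLoc P C V)) : CLTLoc P C V := l.foldr or (.not .tt)

end CLTLoc

/-! For each TA clock `x ∈ X` there are two CLTLoc clocks `(x, 0)` and `(x, 1)`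
and an integer variable `x_v` (here the variable type is `X` itself, `x_v`
being the variable `x`). -/

/-- The other copy of a clock. -/
def flip2 : Fin 2 → Fin 2 := fun j => if j = 0 then 1 else 0

/-- The atom `x_v = j`. -/
def selEq {P X : Type} (x : X) (j : ℕ) : CLTLoc P (X × Fin 2) X :=
  .icmp .eq (.var x) (.const (j : ℤ))

/-- `φ_clock := ⋀_{x∈X}(x₀ = 0 ∧ x₁ > 0 ∧ x_v = 0) ∧
G ⋀_{j∈{0,1}} ⋀_{x∈X}((x_j = 0) → X((x_{(j+1) mod 2} = 0) R ((x_v = j) ∧ (x_j > 0))))`. -/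
noncomputable def phiClock (P X : Type) [Fintype X] : CLTLoc P (X × Fin 2) X :=
  .and
    (CLTLoc.bigAnd (((Finset.univ : Finset X)).toList.map fun x =>
      .and (.clk .eq (x, 0) 0) (.and (.clk .gt (x, 1) 0) (selEq x 0))))
    (CLTLoc.alw (CLTLoc.bigAnd ((List.finRange 2).flatMap fun j =>
      ((Finset.univ : Finset X)).toList.map fun x =>
        CLTLoc.imp (.clk .eq (x, j) 0)
          (.next (CLTLoc.release (.clk .eq (x, flip2 j) 0)
            (.and (selEq x j.val) (.clk .gt (x, j) 0)))))))

/-- A finite conjunction holds exactly when each of its members does. -/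
theorem CLTLoc.sat_bigAnd {P C V : Type} (M : CLTLocInterp P C V) (i : ℕ)
    (l : List (CLTLoc P C V)) :
    (CLTLoc.bigAnd l).sat M i ↔ ∀ f ∈ l, f.sat M i := by
  induction l with
  | nil => simp [CLTLoc.bigAnd, CLTLoc.sat]
  | cons a l ih =>
    simp only [CLTLoc.bigAnd, List.foldr_cons, CLTLoc.sat, List.mem_cons, forall_eq_or_imp] at ih ⊢
    rw [ih]

theorem CLTLoc.sat_alw {P C V : Type} (M : CLTLocInterp P C V) (i : ℕ) (f : CLTLoc P C V) :
    (CLTLoc.alw f).sat M i ↔ ∀ k, i ≤ k → f.sat M k := by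
  simp [CLTLoc.alw, CLTLoc.ev, CLTLoc.sat]

theorem CLTLoc.sat_imp {P C V : Type} (M : CLTLocInterp P C V) (i : ℕ) (f g : CLTLoc P C V) :
    (CLTLoc.imp f g).sat M i ↔ (f.sat M i → g.sat M i) := by
  simp [CLTLoc.imp, CLTLoc.or, CLTLoc.sat]

/-- The "no earlier release" form of `R`: `g` may fail at `k ≥ i` only if `f` held at some
position in `[i, k)`. -/
theorem CLTLoc.sat_release {P C V : Type} (M : CLTLocInterp P C V) (i : ℕ)
    (f g : CLTLoc P C V) :
    (CLTLoc.release f g).sat M i ↔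
      ∀ k, i ≤ k → (∀ m, i ≤ m → m < k → ¬ f.sat M m) → g.sat M k := by
  simp only [CLTLoc.release, CLTLoc.sat]
  push Not
  constructor
  · intro h k hk hm
    by_contra hg
    obtain ⟨m, h1, h2, h3⟩ := h k hk hg
    exact hm m h1 h2 h3
  · intro h k hk hg
    by_contra hm
    push Not at hm
    exact hg (h k hk hm)

theorem phiClock_init {P X : Type} [Fintype X] (M : CLTLocInterp P (X × Fin 2) X)
    (h : CLTLoc.Models M (phiClock P X)) (x : X) :
    M.cl 0 (x, 0) = 0 ∧ M.cl 0 (x, 1) ≠ 0 := by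
  have h1 := (CLTLoc.sat_bigAnd M 0 _).1 h.1 _
    (List.mem_map.2 ⟨x, Finset.mem_toList.2 (Finset.mem_univ x), rfl⟩)
  simp only [CLTLoc.sat, Cmp5.holds, Nat.cast_zero] at h1
  exact ⟨h1.1, h1.2.1.ne'⟩

/-- After `x_j` is `0` at `i`, it stays nonzero up to and including the first later zero of
the other copy. -/
theorem phiClock_step {P X : Type} [Fintype X] (M : CLTLocInterp P (X × Fin 2) X)
    (h : CLTLoc.Models M (phiClock P X)) (x : X) (j : Fin 2) (i k : ℕ) (hik : i < k)
    (h0 : M.cl i (x, j) = 0) (hm : ∀ m, i < m → m < k → M.cl m (x, flip2 j) ≠ 0) :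
    M.cl k (x, j) ≠ 0 := by
  have h1 := (CLTLoc.sat_bigAnd M i _).1 ((CLTLoc.sat_alw M 0 _).1 h.2 i (Nat.zero_le i)) _
    (List.mem_flatMap.2 ⟨j, List.mem_finRange j,
      List.mem_map.2 ⟨x, Finset.mem_toList.2 (Finset.mem_univ x), rfl⟩⟩)
  rw [CLTLoc.sat_imp] at h1
  have h2 := h1 (by simpa [CLTLoc.sat, Cmp5.holds] using h0)
  rw [CLTLoc.sat, CLTLoc.sat_release] at h2
  have h3 := h2 k hik (fun m h1 h2 => by
    simpa [CLTLoc.sat, Cmp5.holds] using hm m h1 h2)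
  simp only [CLTLoc.sat, Cmp5.holds, Nat.cast_zero] at h3
  exact h3.2.ne'

/-- The two copies never vanish together: after the last earlier zero of some copy `x_j`, the
clock `x_j` is still nonzero. -/
theorem phiClock_not_both {P X : Type} [Fintype X] (M : CLTLocInterp P (X × Fin 2) X)
    (h : CLTLoc.Models M (phiClock P X)) (x : X) (i : ℕ) (hi : ∀ j, M.cl i (x, j) = 0) :
    False := by
  classical
  have hinit := phiClock_init M h x
  have hpos : 0 < i := by
    rcases Nat.eq_zero_or_pos i with rfl | hp
    · exact absurd (hi 1) hinit.2
    · exact hp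
  -- `k` is the last position before `i` where some copy vanishes; position `0` is a candidate.
  obtain ⟨k, hk, hmax⟩ := ((Finset.range i).filter fun m => ∃ j, M.cl m (x, j) = 0).exists_max_image
    id ⟨0, Finset.mem_filter.2 ⟨Finset.mem_range.2 hpos, 0, hinit.1⟩⟩
  simp only [Finset.mem_filter, Finset.mem_range, id] at hk hmax
  obtain ⟨hki, j, hj⟩ := hk
  refine phiClock_step M h x j k i hki hj (fun m hkm hmi h0 => ?_) (hi j)
  have := hmax m ⟨hmi, _, h0⟩
  omega

/-- **Statement 11.** In every interpretation satisfying `φ_clock`, for every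
`x ∈ X`: (i) the two copies `x₀`, `x₁` are never simultaneously `0`;
(ii) resets of `x₀` and `x₁` strictly alternate; consequently (iii) at every
position at least one copy is not reset at the next position and the delay
`δ_i` is uniquely determined as `σ(i+1, x_j) − σ(i, x_j)` for a non-reset copy. -/
theorem phiClock_spec {P X : Type} [Fintype X] [Nonempty X]
    (M : CLTLocInterp P (X × Fin 2) X)
    (h : CLTLoc.Models M (phiClock P X)) (x : X) :
    (∀ i : ℕ, ¬ (M.cl i (x, 0) = 0 ∧ M.cl i (x, 1) = 0)) ∧
    (∀ (j : Fin 2) (i i' : ℕ), i < i' →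
      M.cl i (x, j) = 0 → M.cl i' (x, j) = 0 →
      ∃ i'', i < i'' ∧ i'' < i' ∧ M.cl i'' (x, flip2 j) = 0) ∧
    (∀ i : ℕ, ∃ j : Fin 2, M.cl (i + 1) (x, j) ≠ 0 ∧
      M.del i = M.cl (i + 1) (x, j) - M.cl i (x, j)) := by
  have hboth : ∀ i : ℕ, ¬ (M.cl i (x, 0) = 0 ∧ M.cl i (x, 1) = 0) := fun i hi =>
    phiClock_not_both M h x i (Fin.forall_fin_two.2 hi)
  refine ⟨hboth, fun j i i' hii h0 h0' => ?_, fun i => ?_⟩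
  · by_contra hno
    push Not at hno
    exact phiClock_step M h x j i i' hii h0 hno h0'
  · have hex : ∃ j : Fin 2, M.cl (i + 1) (x, j) ≠ 0 := by
      by_contra hno
      push Not at hno
      exact hboth (i + 1) ⟨hno 0, hno 1⟩
    obtain ⟨j, hj⟩ := hex
    refine ⟨j, hj, ?_⟩
    rcases M.cl_step i (x, j) with hs | hs
    · rw [hs, add_tsub_cancel_left]
    · exact absurd hs hj

end TAMC
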